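/- arXiv:1810.07126 — 3 statements merged into one kernel-verified Lean document; each statement's English description precedes it below -/
import Mathlib

section
/- For any concordance-inducing distribution function G and any dimension d, the set K_G of κ_G-compatible d×d matrices satisfies P^B_d(1/2) ⊆ K_G ⊆ P_d, where P^B_d(1/2) is the set of correlation matrices of random vectors with Bern(1/2) margins and P_d is the set of all d×d correlation matrices; moreover both bounds are attained: K_G = P^B_d(1/2) when G is the symmetric Bernoulli distribution function, and K_G = P_d when G is the standard normal distribution function. -/
open MeasureTheory ProbabilityTheory Set

noncomputable section

/-- The uniform distribution on (0,1). -/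
def unif01 : Measure ℝ := volume.restrict (Set.Ioo (0:ℝ) 1)

/-- Pearson's correlation coefficient of two real random variables. -/
def pearson {Ω : Type*} [MeasurableSpace Ω] (μ : Measure Ω) (Y1 Y2 : Ω → ℝ) : ℝ :=
  ((∫ ω, Y1 ω * Y2 ω ∂μ) - (∫ ω, Y1 ω ∂μ) * (∫ ω, Y2 ω ∂μ)) /
    Real.sqrt (variance Y1 μ * variance Y2 μ)

/-- The distribution function (CDF) of a measure on ℝ. -/
def cdfOf (ν : Measure ℝ) : ℝ → ℝ := fun x => (ν (Set.Iic x)).toReal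

/-- The quantile function (generalized inverse) of a distribution function. -/
def quantileFn (G : ℝ → ℝ) (p : ℝ) : ℝ := sInf {x : ℝ | p ≤ G x}

/-- A distribution on ℝ is symmetric (about some point `m`). -/
def SymmetricDist (G : Measure ℝ) : Prop :=
  ∃ m : ℝ, G.map (fun x => 2 * m - x) = G

/-- A distribution on ℝ is non-degenerate: it is not a point mass. -/
def Nondegenerate (G : Measure ℝ) : Prop := ∀ c : ℝ, G ≠ Measure.dirac c

/-- A distribution is concordance inducing: non-degenerate, symmetric,
with finite second moment. -/
def ConcordanceInducing (G : Measure ℝ) : Prop :=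
  Nondegenerate G ∧ SymmetricDist G ∧ Integrable (fun x : ℝ => x ^ 2) G

/-- `corrSet ν d` is the set of `d×d` Pearson correlation matrices of random vectors
all of whose margins have distribution `ν`. -/
def corrSet (ν : Measure ℝ) (d : ℕ) : Set (Matrix (Fin d) (Fin d) ℝ) :=
  {P | ∃ μ : Measure (Fin d → ℝ), IsProbabilityMeasure μ ∧
        (∀ j, μ.map (fun x => x j) = ν) ∧
        (∀ i j, P i j = pearson μ (fun x => x i) (fun x => x j))}

/-- The Bernoulli distribution `Bern(p)` on ℝ. -/
def bern (p : ℝ) : Measure ℝ :=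
  ENNReal.ofReal p • Measure.dirac (1:ℝ) + ENNReal.ofReal (1 - p) • Measure.dirac (0:ℝ)

/-- The set of `d×d` correlation matrices of random vectors with `Bern(1/2)` margins. -/
def PBd (d : ℕ) : Set (Matrix (Fin d) (Fin d) ℝ) := corrSet (bern (1/2)) d

/-- The set of all `d×d` correlation matrices: symmetric positive semi-definite
matrices with entries in `[-1,1]` and unit diagonal. -/
def Pd (d : ℕ) : Set (Matrix (Fin d) (Fin d) ℝ) :=
  {P | P.IsSymm ∧ (∀ i j, P i j ∈ Set.Icc (-1:ℝ) 1) ∧ P.PosSemidef ∧ ∀ i, P i i = 1}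

/-!
A correlation matrix is a covariance matrix conjugated by a diagonal matrix, hence positive
semidefinite; this gives `K_G ⊆ P_d`. For `P^B_d(1/2) ⊆ K_G`, let `B` have `Bern(1/2)` margins and
let `X` have law `G`, symmetric about `m`, independently of `B`. The random signs `2 B_i - 1`
reflect `X` about `m` or leave it in place, so `m + (2 B_i - 1) (X - m)` again has law `G`. The
signs are centred, so multiplying them by the common independent factor `X - m` scales all their
covariances by `E (X - m)²` and leaves their correlations unchanged. Finally, every matrix in
`P_d` is the covariance matrix, hence also the correlation matrix, of a Gaussian vector with
standard normal margins.
-/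

lemma two_mul_abs_apply_le_of_posSemidef {n : Type*} {A : Matrix n n ℝ} (hA : A.PosSemidef)
    (i j : n) : 2 * |A i j| ≤ A i i + A j j := by
  have hsymm : A j i = A i j := by simpa using hA.isHermitian.apply i j
  have quadratic_nonneg (a b : ℝ) : 0 ≤ a * a * A i i + 2 * (a * b) * A i j + b * b * A j j := by
    have h : 0 ≤ a * (A i i * a + A i j * b) + b * (A i j * a + A j j * b) := by
      simpa [dotProduct, Matrix.mulVec, Fin.sum_univ_two, hsymm] using
        (hA.submatrix ![i, j]).dotProduct_mulVec_nonneg ![a, b]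
    linarith
  rw [← abs_two, ← abs_mul, abs_le]
  constructor <;> linarith [quadratic_nonneg 1 1, quadratic_nonneg 1 (-1)]

lemma mem_Pd_iff {d : ℕ} {P : Matrix (Fin d) (Fin d) ℝ} :
    P ∈ Pd d ↔ P.PosSemidef ∧ ∀ i, P i i = 1 := by
  refine ⟨fun ⟨_, _, hP⟩ ↦ hP, fun ⟨hpsd, hdiag⟩ ↦ ⟨?_, fun i j ↦ ?_, hpsd, hdiag⟩⟩
  · exact (Matrix.conjTranspose_eq_transpose_of_trivial P).symm.trans hpsd.isHermitian
  · have h := two_mul_abs_apply_le_of_posSemidef hpsd i j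
    rw [hdiag, hdiag] at h
    exact abs_le.mp (by linarith)

section RandomVariables

variable {Ω Ω' : Type*} [MeasurableSpace Ω] [MeasurableSpace Ω'] {μ : Measure Ω} {X Y Z : Ω → ℝ}

lemma memLp_of_hasLaw {ν : Measure ℝ} {p : ENNReal} (hX : HasLaw X ν μ) (hν : MemLp id p ν) :
    MemLp X p μ :=
  (hX.map_eq ▸ hν).comp_of_map hX.aemeasurable

lemma eq_dirac_of_variance_id_eq_zero {ν : Measure ℝ} [IsProbabilityMeasure ν]
    (hν : MemLp id 2 ν) (hvar : Var[id; ν] = 0) : ν = Measure.dirac (∫ x, x ∂ν) := by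
  have hlaw : HasLaw id (.dirac (∫ x, x ∂ν)) ν :=
    hasLaw_dirac_of_ae_eq (ae_eq_integral_of_variance_eq_zero hν hvar)
  exact Measure.map_id.symm.trans hlaw.map_eq

lemma posSemidef_covariance [IsFiniteMeasure μ] {ι : Type*} [Finite ι] {V : ι → Ω → ℝ}
    (hV : ∀ i, MemLp (V i) 2 μ) : (Matrix.of fun i j ↦ cov[V i, V j; μ]).PosSemidef := by
  cases nonempty_fintype ι
  have hherm : (Matrix.of fun i j ↦ cov[V i, V j; μ]).IsHermitian :=
    .ext fun i j ↦ covariance_comm _ _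
  refine .of_dotProduct_mulVec_nonneg hherm fun c ↦ ?_
  have hsum : star c ⬝ᵥ (Matrix.of fun i j ↦ cov[V i, V j; μ]).mulVec c =
      Var[fun ω ↦ ∑ i, c i * V i ω; μ] := by
    have hcV (i : ι) : MemLp (fun ω ↦ c i * V i ω) 2 μ := (hV i).const_mul (c i)
    rw [variance_fun_sum hcV]
    simp only [covariance_const_mul_left, covariance_const_mul_right, dotProduct, Matrix.mulVec,
      Matrix.of_apply, Finset.mul_sum, star_trivial]
    exact Finset.sum_congr rfl fun i _ ↦ Finset.sum_congr rfl fun j _ ↦ by ring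
  exact hsum ▸ variance_nonneg _ _

lemma pearson_eq_covariance_div [IsProbabilityMeasure μ] (hX : MemLp X 2 μ) (hY : MemLp Y 2 μ) :
    pearson μ X Y = cov[X, Y; μ] / √(Var[X; μ] * Var[Y; μ]) := by
  rw [covariance_eq_sub hX hY]
  rfl

lemma pearson_self [IsProbabilityMeasure μ] (hX : MemLp X 2 μ) (hvar : Var[X; μ] ≠ 0) :
    pearson μ X X = 1 := by
  rw [pearson_eq_covariance_div hX hX, covariance_self hX.aemeasurable,
    Real.sqrt_mul_self (variance_nonneg _ _), div_self hvar]

lemma pearson_comp_of_hasLaw {ν : Measure Ω'} {T : Ω → Ω'} (hT : HasLaw T ν μ) {f g : Ω' → ℝ}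
    (hf : AEMeasurable f ν) (hg : AEMeasurable g ν) :
    pearson μ (fun ω ↦ f (T ω)) (fun ω ↦ g (T ω)) = pearson ν f g := by
  obtain ⟨hT, rfl⟩ := hT
  rw [pearson, pearson, variance_map hf hT, variance_map hg hT,
    integral_map hT hf.aestronglyMeasurable, integral_map hT hg.aestronglyMeasurable,
    integral_map hT (hf.fun_mul hg).aestronglyMeasurable]
  rfl

lemma pearson_const_mul_add_const [IsProbabilityMeasure μ] (hX : MemLp X 2 μ) (hY : MemLp Y 2 μ)
    {a c : ℝ} (hac : 0 < a * c) (b e : ℝ) :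
    pearson μ (fun ω ↦ a * X ω + b) (fun ω ↦ c * Y ω + e) = pearson μ X Y := by
  have haX : MemLp (fun ω ↦ a * X ω) 2 μ := hX.const_mul a
  have hcY : MemLp (fun ω ↦ c * Y ω) 2 μ := hY.const_mul c
  have haXb : MemLp (fun ω ↦ a * X ω + b) 2 μ := haX.add (memLp_const b)
  have hcYe : MemLp (fun ω ↦ c * Y ω + e) 2 μ := hcY.add (memLp_const e)
  rw [pearson_eq_covariance_div haXb hcYe, pearson_eq_covariance_div hX hY,
    covariance_add_const_left (haX.integrable one_le_two),
    covariance_add_const_right (hcY.integrable one_le_two),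
    covariance_const_mul_left, covariance_const_mul_right,
    variance_add_const haX.aestronglyMeasurable, variance_add_const hcY.aestronglyMeasurable,
    variance_const_mul, variance_const_mul,
    show a ^ 2 * Var[X; μ] * (c ^ 2 * Var[Y; μ]) = (a * c) ^ 2 * (Var[X; μ] * Var[Y; μ]) by ring,
    Real.sqrt_mul (sq_nonneg _), Real.sqrt_sq hac.le, ← mul_assoc, mul_div_mul_left _ _ hac.ne']

lemma integral_mul_mul_mul_of_indepFun (hX : AEMeasurable X μ) (hY : AEMeasurable Y μ)
    (hZ : AEMeasurable Z μ) (hind : (fun ω ↦ (X ω, Y ω)) ⟂ᵢ[μ] Z) :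
    ∫ ω, X ω * Z ω * (Y ω * Z ω) ∂μ = (∫ ω, X ω * Y ω ∂μ) * ∫ ω, Z ω ^ 2 ∂μ := by
  rw [← hind.integral_fun_comp_mul_comp (f := fun p : ℝ × ℝ ↦ p.1 * p.2) (g := fun z ↦ z ^ 2)
    (hX.prodMk hY) hZ (by fun_prop) (by fun_prop)]
  exact integral_congr_ae (.of_forall fun ω ↦ by ring)

lemma variance_mul_of_indepFun (hX : AEMeasurable X μ) (hZ : AEMeasurable Z μ)
    (hind : X ⟂ᵢ[μ] Z) (hX0 : μ[X] = 0) :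
    Var[fun ω ↦ X ω * Z ω; μ] = Var[X; μ] * ∫ ω, Z ω ^ 2 ∂μ := by
  have hXZ0 : ∫ ω, X ω * Z ω ∂μ = 0 := by
    rw [hind.integral_fun_mul_eq_mul_integral hX.aestronglyMeasurable hZ.aestronglyMeasurable,
      hX0, zero_mul]
  rw [variance_of_integral_eq_zero (by fun_prop) hXZ0, variance_of_integral_eq_zero hX hX0,
    ← hind.integral_fun_comp_mul_comp (f := fun x ↦ x ^ 2) (g := fun z ↦ z ^ 2) hX hZ
      (by fun_prop) (by fun_prop)]
  simp only [mul_pow]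

lemma pearson_mul_of_indepFun (hX : AEMeasurable X μ) (hY : AEMeasurable Y μ)
    (hZ : AEMeasurable Z μ) (hind : (fun ω ↦ (X ω, Y ω)) ⟂ᵢ[μ] Z) (hX0 : μ[X] = 0)
    (hY0 : μ[Y] = 0) (hZ0 : ∫ ω, Z ω ^ 2 ∂μ ≠ 0) :
    pearson μ (fun ω ↦ X ω * Z ω) (fun ω ↦ Y ω * Z ω) = pearson μ X Y := by
  have hXZ : X ⟂ᵢ[μ] Z := hind.comp measurable_fst measurable_id
  have hYZ : Y ⟂ᵢ[μ] Z := hind.comp measurable_snd measurable_id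
  have hZ_nonneg : 0 ≤ ∫ ω, Z ω ^ 2 ∂μ := integral_nonneg fun ω ↦ sq_nonneg _
  rw [pearson, pearson, integral_mul_mul_mul_of_indepFun hX hY hZ hind,
    hXZ.integral_fun_mul_eq_mul_integral hX.aestronglyMeasurable hZ.aestronglyMeasurable,
    variance_mul_of_indepFun hX hZ hXZ hX0, variance_mul_of_indepFun hY hZ hYZ hY0, hX0, hY0,
    mul_mul_mul_comm, Real.sqrt_mul (mul_nonneg (variance_nonneg _ _) (variance_nonneg _ _)),
    Real.sqrt_mul_self hZ_nonneg, zero_mul, zero_mul, zero_mul, sub_zero, sub_zero,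
    mul_div_mul_right _ _ hZ0]

lemma pearson_const_add_mul_sub_const_of_indepFun [IsProbabilityMeasure μ] {m : ℝ}
    (hX : AEMeasurable X μ) (hY : AEMeasurable Y μ) (hZ : AEMeasurable Z μ)
    (hind : (fun ω ↦ (X ω, Y ω)) ⟂ᵢ[μ] Z) (hX0 : μ[X] = 0) (hY0 : μ[Y] = 0)
    (hZm : ∫ ω, (Z ω - m) ^ 2 ∂μ ≠ 0) (hXZ : MemLp (fun ω ↦ m + X ω * (Z ω - m)) 2 μ)
    (hYZ : MemLp (fun ω ↦ m + Y ω * (Z ω - m)) 2 μ) :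
    pearson μ (fun ω ↦ m + X ω * (Z ω - m)) (fun ω ↦ m + Y ω * (Z ω - m)) = pearson μ X Y := by
  have hind_sub : (fun ω ↦ (X ω, Y ω)) ⟂ᵢ[μ] (fun ω ↦ Z ω - m) :=
    hind.comp measurable_id (measurable_sub_const m)
  rw [← pearson_mul_of_indepFun hX hY (hZ.sub_const m) hind_sub hX0 hY0 hZm,
    ← pearson_const_mul_add_const hXZ hYZ (a := 1) (c := 1) (by norm_num) (-m) (-m)]
  simp only [one_mul, add_neg_cancel_comm]

lemma posSemidef_pearson [IsProbabilityMeasure μ] {ι : Type*} [Finite ι] {V : ι → Ω → ℝ}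
    (hV : ∀ i, MemLp (V i) 2 μ) : (Matrix.of fun i j ↦ pearson μ (V i) (V j)).PosSemidef := by
  classical
  cases nonempty_fintype ι
  let D : Matrix ι ι ℝ := .diagonal fun i ↦ (√Var[V i; μ])⁻¹
  have hconj : (Matrix.of fun i j ↦ pearson μ (V i) (V j)) =
      D * (Matrix.of fun i j ↦ cov[V i, V j; μ]) * D.conjTranspose := by
    ext i j
    simp only [D, Matrix.diagonal_conjTranspose, Matrix.mul_diagonal, Matrix.diagonal_mul,
      Matrix.of_apply, star_trivial, pearson_eq_covariance_div (hV i) (hV j),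
      Real.sqrt_mul (variance_nonneg _ _)]
    ring
  exact hconj ▸ (posSemidef_covariance hV).mul_mul_conjTranspose_same D

lemma mem_corrSet_of_hasLaw [IsProbabilityMeasure μ] {ν : Measure ℝ} {d : ℕ}
    {V : Fin d → Ω → ℝ} (hV : ∀ j, HasLaw (V j) ν μ) {P : Matrix (Fin d) (Fin d) ℝ}
    (hP : ∀ i j, P i j = pearson μ (V i) (V j)) : P ∈ corrSet ν d := by
  have hmeas : AEMeasurable (fun ω j ↦ V j ω) μ :=
    aemeasurable_pi_lambda _ fun j ↦ (hV j).aemeasurable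
  have heval (j : Fin d) : AEMeasurable (fun x ↦ x j) (μ.map fun ω j ↦ V j ω) :=
    (measurable_pi_apply j).aemeasurable
  refine ⟨μ.map fun ω j ↦ V j ω, Measure.isProbabilityMeasure_map hmeas, fun j ↦ ?_, fun i j ↦ ?_⟩
  · rw [AEMeasurable.map_map_of_aemeasurable (heval j) hmeas]
    exact (hV j).map_eq
  · rw [hP, ← pearson_comp_of_hasLaw ⟨hmeas, rfl⟩ (heval i) (heval j)]

lemma hasLaw_random_reflection [IsProbabilityMeasure μ] {ν : Measure ℝ} {m : ℝ}
    (hν : ν.map (fun x ↦ 2 * m - x) = ν) (hX : HasLaw X ν μ) {S : Ω → ℝ}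
    (hS : AEMeasurable S μ) (hSX : S ⟂ᵢ[μ] X) (hsign : ∀ᵐ ω ∂μ, S ω = 1 ∨ S ω = -1) :
    HasLaw (fun ω ↦ m + S ω * (X ω - m)) ν μ := by
  have : IsProbabilityMeasure ν := hX.isProbabilityMeasure_iff.mp inferInstance
  have : IsProbabilityMeasure (μ.map S) := Measure.isProbabilityMeasure_map hS
  have hjoint : HasLaw (fun ω ↦ (S ω, X ω)) ((μ.map S).prod ν) μ :=
    ⟨hS.prodMk hX.aemeasurable, by
      rw [(indepFun_iff_map_prod_eq_prod_map_map hS hX.aemeasurable).mp hSX, hX.map_eq]⟩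
  have hfibre : ∀ᵐ s ∂μ.map S, ν.map (fun x ↦ m + s * (x - m)) = ν := by
    have hsign_map : ∀ᵐ s ∂μ.map S, s = 1 ∨ s = -1 :=
      (ae_map_iff hS ((measurableSet_singleton 1).union (measurableSet_singleton (-1)))).mpr hsign
    filter_upwards [hsign_map]
    rintro s (rfl | rfl)
    · simp
    · convert hν using 3
      ring
  have hskew := (MeasurePreserving.id (μ.map S)).skew_product
    (g := fun s x ↦ m + s * (x - m)) (by unfold Function.uncurry; fun_prop) hfibre
  exact (measurePreserving_snd.comp hskew).hasLaw.comp hjoint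

end RandomVariables

lemma ae_bern (p : ℝ) : ∀ᵐ x ∂bern p, x = 1 ∨ x = 0 := by
  rw [bern, ae_add_measure_iff]
  exact ⟨Measure.ae_smul_measure (by simp [ae_dirac_eq]) _,
    Measure.ae_smul_measure (by simp [ae_dirac_eq]) _⟩

lemma bern_eq_bernoulliMeasure {p : ℝ} (hp : p ∈ Icc (0 : ℝ) 1) :
    bern p = bernoulliMeasure 1 0 ⟨p, hp⟩ := by
  have hcoe (q : unitInterval) : ENNReal.ofReal q = unitInterval.toNNReal q :=
    ENNReal.ofReal_eq_coe_nnreal q.2.1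
  rw [bern, bernoulliMeasure_def, ENNReal.smul_def, ENNReal.smul_def, ← hcoe, ← hcoe,
    unitInterval.coe_symm_eq]

lemma integral_bern {p : ℝ} (hp : p ∈ Icc (0 : ℝ) 1) (f : ℝ → ℝ) :
    ∫ x, f x ∂bern p = p * f 1 + (1 - p) * f 0 := by
  rw [bern_eq_bernoulliMeasure hp, integral_bernoulliMeasure]
  rfl

lemma memLp_id_bern {p : ℝ} (hp : p ∈ Icc (0 : ℝ) 1) : MemLp id 2 (bern p) := by
  rw [bern_eq_bernoulliMeasure hp, memLp_two_iff_integrable_sq aestronglyMeasurable_id]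
  exact integrable_bernoulliMeasure ..

lemma corrSet_subset_Pd {ν : Measure ℝ} (hν : Var[id; ν] ≠ 0) (d : ℕ) : corrSet ν d ⊆ Pd d := by
  rintro P ⟨μ, hμ, hmarg, hP⟩
  have hvar (i : Fin d) : Var[fun x : Fin d → ℝ ↦ x i; μ] ≠ 0 := by
    rwa [HasLaw.variance_eq ⟨(measurable_pi_apply i).aemeasurable, hmarg i⟩]
  have hmem (i : Fin d) : MemLp (fun x : Fin d → ℝ ↦ x i) 2 μ :=
    memLp_two_of_variance_ne_zero (measurable_pi_apply i).aestronglyMeasurable (hvar i)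
  obtain rfl : P = Matrix.of fun i j ↦ pearson μ (fun x ↦ x i) (fun x ↦ x j) := Matrix.ext hP
  exact mem_Pd_iff.mpr ⟨posSemidef_pearson hmem, fun i ↦ pearson_self (hmem i) (hvar i)⟩

lemma integral_sub_sq_ne_zero {ν : Measure ℝ} [IsProbabilityMeasure ν] (hν : Var[id; ν] ≠ 0)
    (m : ℝ) : ∫ x, (x - m) ^ 2 ∂ν ≠ 0 := by
  have hle : Var[id; ν] ≤ ∫ x, (x - m) ^ 2 ∂ν := by
    rw [← variance_sub_const aestronglyMeasurable_id m]
    exact variance_le_expectation_sq (by fun_prop)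
  exact (((variance_nonneg _ _).lt_of_ne' hν).trans_le hle).ne'

lemma mem_corrSet_of_sign {Ω : Type*} [MeasurableSpace Ω] {μ : Measure Ω}
    [IsProbabilityMeasure μ] {G : Measure ℝ} [IsProbabilityMeasure G] (hsymm : SymmetricDist G)
    (hvar : Var[id; G] ≠ 0) {d : ℕ} {S : Fin d → Ω → ℝ} (hS : ∀ i, Measurable (S i))
    (hsign : ∀ i, ∀ᵐ ω ∂μ, S i ω = 1 ∨ S i ω = -1) (hS0 : ∀ i, μ[S i] = 0)
    {P : Matrix (Fin d) (Fin d) ℝ} (hP : ∀ i j, P i j = pearson μ (S i) (S j)) :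
    P ∈ corrSet G d := by
  obtain ⟨m, hm⟩ := hsymm
  let Y (i : Fin d) (ω : Ω × ℝ) : ℝ := m + S i ω.1 * (ω.2 - m)
  have hfst : HasLaw Prod.fst μ (μ.prod G) := measurePreserving_fst.hasLaw
  have hsnd : HasLaw Prod.snd G (μ.prod G) := measurePreserving_snd.hasLaw
  have hSfst (i : Fin d) : AEMeasurable (fun ω ↦ S i ω.1) (μ.prod G) := by fun_prop
  have hY (i : Fin d) : HasLaw (Y i) G (μ.prod G) :=
    hasLaw_random_reflection hm hsnd (hSfst i) (indepFun_prod (Y := id) (hS i) measurable_id)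
      (measurePreserving_fst.quasiMeasurePreserving.ae (hsign i))
  have hYmem (i : Fin d) : MemLp (Y i) 2 (μ.prod G) :=
    memLp_of_hasLaw (hY i) (memLp_two_of_variance_ne_zero aestronglyMeasurable_id hvar)
  have hmean (i : Fin d) : ∫ ω, S i ω.1 ∂μ.prod G = 0 :=
    (hfst.integral_comp (hS i).aestronglyMeasurable).trans (hS0 i)
  have hsq : ∫ ω, (ω.2 - m) ^ 2 ∂μ.prod G ≠ 0 :=
    (hsnd.integral_comp (f := fun x ↦ (x - m) ^ 2) (by fun_prop)).trans_ne
      (integral_sub_sq_ne_zero hvar m)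
  have hind (i j : Fin d) : (fun ω : Ω × ℝ ↦ (S i ω.1, S j ω.1)) ⟂ᵢ[μ.prod G] Prod.snd :=
    indepFun_prod (Y := id) ((hS i).prodMk (hS j)) measurable_id
  refine mem_corrSet_of_hasLaw hY fun i j ↦ ?_
  calc P i j = pearson μ (S i) (S j) := hP i j
    _ = pearson (μ.prod G) (fun ω ↦ S i ω.1) (fun ω ↦ S j ω.1) :=
      (pearson_comp_of_hasLaw hfst (hS i).aemeasurable (hS j).aemeasurable).symm
    _ = pearson (μ.prod G) (Y i) (Y j) :=
      (pearson_const_add_mul_sub_const_of_indepFun (hSfst i) (hSfst j) hsnd.aemeasurable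
        (hind i j) (hmean i) (hmean j) hsq (hYmem i) (hYmem j)).symm

lemma PBd_subset_corrSet {G : Measure ℝ} [IsProbabilityMeasure G] (hsymm : SymmetricDist G)
    (hvar : Var[id; G] ≠ 0) (d : ℕ) : PBd d ⊆ corrSet G d := by
  rintro P ⟨μ, hμ, hmarg, hP⟩
  have hhalf : (1 / 2 : ℝ) ∈ Icc 0 1 := by norm_num
  have hB (i : Fin d) : HasLaw (fun x : Fin d → ℝ ↦ x i) (bern (1 / 2)) μ :=
    ⟨(measurable_pi_apply i).aemeasurable, hmarg i⟩
  have hBmem (i : Fin d) := memLp_of_hasLaw (hB i) (memLp_id_bern hhalf)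
  refine mem_corrSet_of_sign hsymm hvar (μ := μ) (S := fun i x ↦ 2 * x i + -1)
    (fun i ↦ by fun_prop) (fun i ↦ ?_) (fun i ↦ ?_) fun i j ↦ ?_
  · filter_upwards [ae_of_ae_map (hB i).aemeasurable ((hB i).map_eq ▸ ae_bern (1 / 2))] with x hx
    rcases hx with hx | hx <;> norm_num [hx]
  · calc ∫ x, (2 * x i + -1) ∂μ = ∫ b, (2 * b + -1) ∂bern (1 / 2) :=
          (hB i).integral_comp (f := fun b ↦ 2 * b + -1) (by fun_prop)
      _ = 0 := by rw [integral_bern hhalf]; norm_num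
  · rw [hP, pearson_const_mul_add_const (hBmem i) (hBmem j) (by norm_num)]

lemma Pd_subset_corrSet_gaussianReal (d : ℕ) : Pd d ⊆ corrSet (gaussianReal 0 1) d := by
  intro P hP
  obtain ⟨hpsd, hdiag⟩ := mem_Pd_iff.mp hP
  have hmarg (j : Fin d) : HasLaw (fun x : EuclideanSpace ℝ (Fin d) ↦ x j) (gaussianReal 0 1)
      (multivariateGaussian 0 P) := by
    simpa [hdiag] using (measurePreserving_eval_multivariateGaussian (μ := 0) hpsd (i := j)).hasLaw
  have hmem (j : Fin d) := memLp_of_hasLaw (hmarg j) (memLp_id_gaussianReal 2)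
  refine mem_corrSet_of_hasLaw hmarg fun i j ↦ ?_
  rw [pearson_eq_covariance_div (hmem i) (hmem j), covariance_eval_multivariateGaussian hpsd,
    variance_eval_multivariateGaussian hpsd, variance_eval_multivariateGaussian hpsd, hdiag, hdiag,
    mul_one, Real.sqrt_one, div_one]

lemma ConcordanceInducing.variance_id_ne_zero {G : Measure ℝ} [IsProbabilityMeasure G]
    (hG : ConcordanceInducing G) : Var[id; G] ≠ 0 := by
  obtain ⟨hnondeg, -, hsq⟩ := hG
  have hmem : MemLp id 2 G := (memLp_two_iff_integrable_sq aestronglyMeasurable_id).mpr hsq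
  exact fun hvar ↦ hnondeg _ (eq_dirac_of_variance_id_eq_zero hmem hvar)

/-- for any concordance-inducing `G`, `P^B_d(1/2) ⊆ K_G ⊆ P_d`;
both bounds are attained: `K_G = P^B_d(1/2)` for the symmetric Bernoulli distribution
and `K_G = P_d` for the standard normal distribution. -/
theorem upper_and_lower_bounds_of_KG (d : ℕ) :
    (∀ G : Measure ℝ, IsProbabilityMeasure G → ConcordanceInducing G →
        PBd d ⊆ corrSet G d ∧ corrSet G d ⊆ Pd d) ∧
      corrSet (bern (1/2)) d = PBd d ∧
      corrSet (gaussianReal 0 1) d = Pd d := by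
  refine ⟨fun G _ hG ↦ ⟨?_, ?_⟩, rfl, ?_⟩
  · exact PBd_subset_corrSet hG.2.1 hG.variance_id_ne_zero d
  · exact corrSet_subset_Pd hG.variance_id_ne_zero d
  · refine (corrSet_subset_Pd ?_ d).antisymm (Pd_subset_corrSet_gaussianReal d)
    rw [variance_id_gaussianReal]
    exact one_ne_zero
end
end

section
/- The set B_d of d×d matrices of pairwise Blomqvist's beta coefficients of d-dimensional random vectors with continuous margins coincides with the set P^B_d(1/2) of d×d Pearson correlation matrices of random vectors with all margins Bern(1/2). -/
open MeasureTheory ProbabilityTheory Set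

noncomputable section

/-- The set of `d×d` matrices of pairwise Blomqvist's beta coefficients of
`d`-dimensional random vectors with continuous margins, using the representation
`β(Xi,Xj) = ρ(1{Fi(Xi) > 1/2}, 1{Fj(Xj) > 1/2})`. -/
def Bd (d : ℕ) : Set (Matrix (Fin d) (Fin d) ℝ) :=
  {P | ∃ μ : Measure (Fin d → ℝ), IsProbabilityMeasure μ ∧
        (∀ j, Continuous (cdfOf (μ.map fun x => x j))) ∧
        (∀ i j, P i j = pearson μ
          (fun x => if 1/2 < cdfOf (μ.map fun y => y i) (x i) then (1:ℝ) else 0)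
          (fun x => if 1/2 < cdfOf (μ.map fun y => y j) (x j) then (1:ℝ) else 0))}

/-!
For `X` with distribution function `F` and any `q`, the events `F q < F X` and `q < X` agree almost
surely. Hence if `F q = p`, then `1{F X > p}` is almost surely the indicator of `q < X`. When `F` is
continuous such a `q` exists, so `1{F X > p}` is `Bern(1 - p)`-distributed. Conversely, given a
vector `Y` with `Bern(1 - p)` margins, add to all its coordinates one independent uniform variable
`U` on `(0, 1)`: each `Y j + U` has an atomless law, and since it exceeds `1` exactly when
`Y j = 1`, the value `q = 1` has level `p` and `1{F (Y j + U) > p} = Y j` almost surely.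
-/

section Pearson

variable {Ω Ω' : Type*} [MeasurableSpace Ω] [MeasurableSpace Ω'] {μ : Measure Ω}

lemma pearson_map {f : Ω → Ω'} {Y Z : Ω' → ℝ} (hf : AEMeasurable f μ)
    (hY : AEMeasurable Y (μ.map f)) (hZ : AEMeasurable Z (μ.map f)) :
    pearson (μ.map f) Y Z = pearson μ (Y ∘ f) (Z ∘ f) := by
  have hYZ : AEMeasurable (fun ω ↦ Y ω * Z ω) (μ.map f) := hY.mul hZ
  simp only [pearson, integral_map hf hYZ.aestronglyMeasurable,
    integral_map hf hY.aestronglyMeasurable, integral_map hf hZ.aestronglyMeasurable,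
    variance_map hY hf, variance_map hZ hf, Function.comp_apply]

lemma pearson_congr_ae {Y Y' Z Z' : Ω → ℝ} (hY : Y =ᵐ[μ] Y') (hZ : Z =ᵐ[μ] Z') :
    pearson μ Y Z = pearson μ Y' Z' := by
  have hYZ : (fun ω ↦ Y ω * Z ω) =ᵐ[μ] fun ω ↦ Y' ω * Z' ω := hY.mul hZ
  rw [pearson, pearson, integral_congr_ae hYZ, integral_congr_ae hY, integral_congr_ae hZ,
    variance_congr hY, variance_congr hZ]

lemma pearson_mem_corrSet [IsProbabilityMeasure μ] {d : ℕ} {ν : Measure ℝ} {Y : Ω → Fin d → ℝ}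
    (hY : AEMeasurable Y μ) (hν : ∀ j, μ.map (fun ω ↦ Y ω j) = ν) :
    Matrix.of (fun i j ↦ pearson μ (fun ω ↦ Y ω i) (fun ω ↦ Y ω j)) ∈ corrSet ν d := by
  refine ⟨μ.map Y, Measure.isProbabilityMeasure_map hY, fun j ↦ ?_, fun i j ↦ ?_⟩
  · rw [AEMeasurable.map_map_of_aemeasurable (measurable_pi_apply j).aemeasurable hY]
    exact hν j
  · rw [pearson_map hY (measurable_pi_apply i).aemeasurable (measurable_pi_apply j).aemeasurable]
    rfl

end Pearson

section Bernoulli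

lemma map_indicator_one_eq_bern {Ω : Type*} [MeasurableSpace Ω] {μ : Measure Ω}
    [IsProbabilityMeasure μ] {A : Set Ω} (hA : MeasurableSet A) :
    μ.map (A.indicator 1) = bern (μ.real A) := by
  have map_on_A : (μ.restrict A).map (A.indicator 1) = μ A • Measure.dirac (1 : ℝ) := by
    rw [Measure.map_congr (indicator_ae_eq_restrict hA), Pi.one_def, Measure.map_const,
      Measure.restrict_apply_univ]
  have map_on_compl : (μ.restrict Aᶜ).map (A.indicator 1) = μ Aᶜ • Measure.dirac (0 : ℝ) := by
    rw [Measure.map_congr (indicator_ae_eq_restrict_compl hA), Pi.zero_def, Measure.map_const,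
      Measure.restrict_apply_univ]
  have hmeas : Measurable (A.indicator (1 : Ω → ℝ)) := measurable_one.indicator hA
  rw [bern, ← probReal_compl_eq_one_sub hA, ofReal_measureReal, ofReal_measureReal, ← map_on_A,
    ← map_on_compl, ← Measure.map_add _ _ hmeas, Measure.restrict_add_restrict_compl hA]

lemma bern_singleton_one (p : ℝ) : bern p {1} = ENNReal.ofReal p := by
  simp [bern]

lemma ae_bern_eq_zero_or_eq_one (p : ℝ) : ∀ᵐ y ∂bern p, y = 0 ∨ y = 1 := by
  simp [bern, ae_iff]

end Bernoulli

section DistributionFunction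

lemma ae_measure_Ioc_ne_zero {α : Type*} [LinearOrder α] [TopologicalSpace α]
    [OrderClosedTopology α] [SecondCountableTopology α] [MeasurableSpace α] (ν : Measure α)
    (q : α) : ∀ᵐ x ∂ν, q < x → ν (Ioc q x) ≠ 0 := by
  suffices h : ν {x | q < x ∧ ν (Ioc q x) = 0} = 0 by simpa [ae_iff] using h
  refine measure_null_of_locally_null _ fun x ⟨hqx, hx⟩ ↦ ?_
  by_cases hmax : ∃ y, x < y ∧ ν (Ioc q y) = 0
  · obtain ⟨y, hxy, hy⟩ := hmax
    exact ⟨Ioo q y, mem_nhdsWithin_of_mem_nhds (Ioo_mem_nhds hqx hxy),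
      measure_mono_null Ioo_subset_Ioc_self hy⟩
  · push Not at hmax
    have hsub : {y | q < y ∧ ν (Ioc q y) = 0} ⊆ Ioc q x :=
      fun y ⟨hqy, hy⟩ ↦ ⟨hqy, not_lt.mp fun hxy ↦ hmax y hxy hy⟩
    exact ⟨Ioc q x, Filter.mem_of_superset self_mem_nhdsWithin hsub, hx⟩

variable {ν : Measure ℝ}

lemma monotone_cdfOf [IsFiniteMeasure ν] : Monotone (cdfOf ν) :=
  fun _ _ hxy ↦ measureReal_mono (Iic_subset_Iic.mpr hxy)

lemma cdfOf_add_measureReal_Ioc [IsFiniteMeasure ν] {q x : ℝ} (hqx : q ≤ x) :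
    cdfOf ν q + ν.real (Ioc q x) = cdfOf ν x := by
  change ν.real (Iic q) + ν.real (Ioc q x) = ν.real (Iic x)
  rw [← measureReal_union (Iic_disjoint_Ioc le_rfl) measurableSet_Ioc, Iic_union_Ioc_eq_Iic hqx]

lemma ae_cdfOf_lt_cdfOf_iff_lt [IsFiniteMeasure ν] (q : ℝ) :
    ∀ᵐ x ∂ν, cdfOf ν q < cdfOf ν x ↔ q < x := by
  filter_upwards [ae_measure_Ioc_ne_zero ν q] with x hx
  refine ⟨monotone_cdfOf.reflect_lt, fun hqx ↦ ?_⟩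
  have hpos : 0 < ν.real (Ioc q x) := ENNReal.toReal_pos (hx hqx) (measure_ne_top _ _)
  linarith [cdfOf_add_measureReal_Ioc (ν := ν) hqx.le]

lemma cdfOf_eq_cdf [IsProbabilityMeasure ν] : cdfOf ν = cdf ν :=
  funext fun x ↦ (cdf_eq_real ν x).symm

lemma exists_cdfOf_eq [IsProbabilityMeasure ν] (hν : Continuous (cdfOf ν)) {p : ℝ}
    (hp : p ∈ Ioo (0 : ℝ) 1) : ∃ q, cdfOf ν q = p := by
  rw [cdfOf_eq_cdf] at hν ⊢
  exact mem_range_of_exists_le_of_exists_ge hν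
    ((tendsto_cdf_atBot ν).eventually_le_const hp.1).exists
    ((tendsto_cdf_atTop ν).eventually_const_le hp.2).exists

lemma continuous_cdfOf [IsProbabilityMeasure ν] [NullSingletonClass ν] : Continuous (cdfOf ν) := by
  rw [cdfOf_eq_cdf, continuous_iff_continuousAt]
  intro x
  have hjump : ENNReal.ofReal (cdf ν x - Function.leftLim (cdf ν) x) = 0 := by
    rw [← StieltjesFunction.measure_singleton, measure_cdf, measure_singleton]
  have hleft : Function.leftLim (cdf ν) x = cdf ν x :=
    le_antisymm ((monotone_cdf ν).leftLim_le le_rfl)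
      (sub_nonpos.mp (ENNReal.ofReal_eq_zero.mp hjump))
  rw [(monotone_cdf ν).continuousAt_iff_leftLim_eq_rightLim, hleft, StieltjesFunction.rightLim_eq]

end DistributionFunction

lemma nullSingletonClass_conv {G : Type*} [AddGroup G] [MeasurableSpace G] [MeasurableAdd₂ G]
    [MeasurableSingletonClass G] (ρ ν : Measure G) [SFinite ν] [NullSingletonClass ν] :
    NullSingletonClass (ρ.conv ν) := by
  refine ⟨fun c ↦ ?_⟩
  have hadd : Measurable fun z : G × G ↦ z.1 + z.2 := by fun_prop
  rw [Measure.conv, Measure.map_apply hadd (measurableSet_singleton c)]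
  refine Measure.measure_prod_null_of_ae_null (hadd (measurableSet_singleton c)) (.of_forall ?_)
  intro x
  have hslice : Prod.mk x ⁻¹' ((fun z : G × G ↦ z.1 + z.2) ⁻¹' {c}) = {-x + c} := by
    ext y
    simp [eq_neg_add_iff_add_eq]
  simp [hslice]

instance isProbabilityMeasure_unif01 : IsProbabilityMeasure unif01 := ⟨by simp [unif01]⟩

instance nullSingletonClass_unif01 : NullSingletonClass unif01 := by
  unfold unif01
  infer_instance

lemma ae_unif01_mem_Ioo : ∀ᵐ u ∂unif01, u ∈ Ioo (0 : ℝ) 1 :=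
  ae_restrict_mem measurableSet_Ioo

/-- The random variable `1{F(X) > p}`, where `F` is the distribution function of `X`. -/
def exceedanceIndicator {Ω : Type*} [MeasurableSpace Ω] (μ : Measure Ω) (p : ℝ) (X : Ω → ℝ) :
    Ω → ℝ :=
  fun ω ↦ if p < cdfOf (μ.map X) (X ω) then 1 else 0

/-- The set of `d × d` matrices of pairwise correlations between the exceedance indicators
`1{F j (X j) > p}` of random vectors `X` with continuous margins, extending Blomqvist's beta
matrices (the case `p = 1 / 2`) to any level `p`. -/
def exceedanceCorrSet (p : ℝ) (d : ℕ) : Set (Matrix (Fin d) (Fin d) ℝ) :=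
  {P | ∃ μ : Measure (Fin d → ℝ), IsProbabilityMeasure μ ∧
        (∀ j, Continuous (cdfOf (μ.map fun x ↦ x j))) ∧
        (∀ i j, P i j = pearson μ
          (exceedanceIndicator μ p fun x ↦ x i) (exceedanceIndicator μ p fun x ↦ x j))}

section Exceedance

variable {Ω : Type*} [MeasurableSpace Ω] {μ : Measure Ω} {p : ℝ}

lemma measurable_exceedanceIndicator [IsFiniteMeasure μ] {X : Ω → ℝ} (hX : Measurable X) :
    Measurable (exceedanceIndicator μ p X) :=
  Measurable.ite (measurableSet_lt measurable_const (monotone_cdfOf.measurable.comp hX))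
    measurable_const measurable_const

lemma exceedanceIndicator_map_comp {Ω' : Type*} [MeasurableSpace Ω'] {f : Ω → Ω'} {X : Ω' → ℝ}
    (hf : AEMeasurable f μ) (hX : AEMeasurable X (μ.map f)) :
    exceedanceIndicator (μ.map f) p X ∘ f = exceedanceIndicator μ p (X ∘ f) := by
  funext ω
  simp only [exceedanceIndicator, Function.comp_apply, hX.map_map_of_aemeasurable hf]

lemma exceedanceIndicator_ae_eq_indicator [IsFiniteMeasure μ] {X : Ω → ℝ} (hX : AEMeasurable X μ)
    {q : ℝ} (hq : cdfOf (μ.map X) q = p) :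
    exceedanceIndicator μ p X =ᵐ[μ] {ω | q < X ω}.indicator 1 := by
  filter_upwards [ae_of_ae_map hX (ae_cdfOf_lt_cdfOf_iff_lt q)] with ω hω
  rw [hq] at hω
  simp [exceedanceIndicator, indicator_apply, hω]

lemma measureReal_lt_eq_one_sub_cdfOf [IsProbabilityMeasure μ] {X : Ω → ℝ} (hX : Measurable X)
    (q : ℝ) : μ.real {ω | q < X ω} = 1 - cdfOf (μ.map X) q := by
  have hcdf : cdfOf (μ.map X) q = μ.real (X ⁻¹' Iic q) :=
    map_measureReal_apply hX measurableSet_Iic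
  rw [hcdf, ← probReal_compl_eq_one_sub (hX measurableSet_Iic), ← preimage_compl, compl_Iic]
  rfl

lemma map_exceedanceIndicator [IsProbabilityMeasure μ] {X : Ω → ℝ} (hX : Measurable X)
    (hcont : Continuous (cdfOf (μ.map X))) (hp : p ∈ Ioo (0 : ℝ) 1) :
    μ.map (exceedanceIndicator μ p X) = bern (1 - p) := by
  have : IsProbabilityMeasure (μ.map X) := Measure.isProbabilityMeasure_map hX.aemeasurable
  obtain ⟨q, hq⟩ := exists_cdfOf_eq hcont hp
  rw [Measure.map_congr (exceedanceIndicator_ae_eq_indicator hX.aemeasurable hq),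
    map_indicator_one_eq_bern (measurableSet_lt measurable_const hX),
    measureReal_lt_eq_one_sub_cdfOf hX, hq]

lemma pearson_exceedanceIndicator_mem_exceedanceCorrSet [IsProbabilityMeasure μ] {d : ℕ}
    {X : Ω → Fin d → ℝ} (hX : AEMeasurable X μ)
    (hcont : ∀ j, Continuous (cdfOf (μ.map fun ω ↦ X ω j))) :
    Matrix.of (fun i j ↦ pearson μ (exceedanceIndicator μ p fun ω ↦ X ω i)
      (exceedanceIndicator μ p fun ω ↦ X ω j)) ∈ exceedanceCorrSet p d := by
  have := Measure.isProbabilityMeasure_map hX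
  have heval (j : Fin d) : Measurable fun x : Fin d → ℝ ↦ x j := measurable_pi_apply j
  refine ⟨μ.map X, this, fun j ↦ ?_, fun i j ↦ ?_⟩
  · rw [AEMeasurable.map_map_of_aemeasurable (heval j).aemeasurable hX]
    exact hcont j
  · rw [pearson_map hX (measurable_exceedanceIndicator (heval i)).aemeasurable
        (measurable_exceedanceIndicator (heval j)).aemeasurable,
      exceedanceIndicator_map_comp hX (heval i).aemeasurable,
      exceedanceIndicator_map_comp hX (heval j).aemeasurable]
    rfl

end Exceedance

section BernoulliPlusUniform

variable {Ω : Type*} [MeasurableSpace Ω] {μ : Measure Ω} {p : ℝ} {Y U : Ω → ℝ}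

lemma ae_eq_zero_or_eq_one_of_map_eq_bern (hY : AEMeasurable Y μ) (hbern : μ.map Y = bern p) :
    ∀ᵐ ω ∂μ, Y ω = 0 ∨ Y ω = 1 :=
  ae_of_ae_map hY (hbern ▸ ae_bern_eq_zero_or_eq_one p)

lemma exceedanceIndicator_ae_eq_of_map_eq_bern [IsProbabilityMeasure μ] {X : Ω → ℝ} {q : ℝ}
    (hX : Measurable X) (hY : Measurable Y) (hp : p ≤ 1) (hbern : μ.map Y = bern (1 - p))
    (hXY : ∀ᵐ ω ∂μ, q < X ω ↔ Y ω = 1) : exceedanceIndicator μ p X =ᵐ[μ] Y := by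
  have hprob : μ.real {ω | q < X ω} = 1 - p := by
    have hset : {ω | q < X ω} =ᵐ[μ] Y ⁻¹' {1} := by
      filter_upwards [hXY] with ω hω using propext hω
    rw [measureReal_congr hset, ← map_measureReal_apply hY (measurableSet_singleton 1), hbern,
      measureReal_def, bern_singleton_one, ENNReal.toReal_ofReal (sub_nonneg.mpr hp)]
  have hlevel : cdfOf (μ.map X) q = p := by
    linarith [measureReal_lt_eq_one_sub_cdfOf (μ := μ) hX q]
  filter_upwards [exceedanceIndicator_ae_eq_indicator hX.aemeasurable hlevel,
    ae_eq_zero_or_eq_one_of_map_eq_bern hY.aemeasurable hbern, hXY] with ω hω hYω hXYω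
  rw [hω]
  rcases hYω with h | h <;> simp [h, hXYω]

lemma exceedanceIndicator_add_ae_eq [IsProbabilityMeasure μ] (hY : Measurable Y)
    (hU : Measurable U) (hp : p ≤ 1) (hbern : μ.map Y = bern (1 - p))
    (hU01 : ∀ᵐ ω ∂μ, U ω ∈ Ioo (0 : ℝ) 1) :
    exceedanceIndicator μ p (fun ω ↦ Y ω + U ω) =ᵐ[μ] Y := by
  refine exceedanceIndicator_ae_eq_of_map_eq_bern (q := 1) (hY.add hU) hY hp hbern ?_
  filter_upwards [ae_eq_zero_or_eq_one_of_map_eq_bern hY.aemeasurable hbern, hU01]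
    with ω hYω ⟨hpos, hlt⟩
  rcases hYω with h | h <;> simp [h, hpos, hlt.le]

lemma continuous_cdfOf_map_add [IsProbabilityMeasure μ] (hY : Measurable Y) (hU : Measurable U)
    (hindep : IndepFun Y U μ) [NullSingletonClass (μ.map U)] :
    Continuous (cdfOf (μ.map fun ω ↦ Y ω + U ω)) := by
  have hlaw : μ.map (fun ω ↦ Y ω + U ω) = (μ.map Y).conv (μ.map U) :=
    hindep.map_add_eq_map_conv_map hY hU
  have hprob : IsProbabilityMeasure (μ.map fun ω ↦ Y ω + U ω) :=
    Measure.isProbabilityMeasure_map (hY.add hU).aemeasurable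
  have hatoms : NullSingletonClass (μ.map fun ω ↦ Y ω + U ω) := hlaw ▸ nullSingletonClass_conv _ _
  exact continuous_cdfOf

end BernoulliPlusUniform

lemma exceedanceCorrSet_subset_corrSet_bern {p : ℝ} (hp : p ∈ Ioo (0 : ℝ) 1) (d : ℕ) :
    exceedanceCorrSet p d ⊆ corrSet (bern (1 - p)) d := by
  rintro P ⟨μ, hμ, hcont, hP⟩
  have heval (j : Fin d) : Measurable fun x : Fin d → ℝ ↦ x j := measurable_pi_apply j
  have hY : Measurable fun x j ↦ exceedanceIndicator μ p (fun y : Fin d → ℝ ↦ y j) x :=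
    measurable_pi_lambda _ fun j ↦ measurable_exceedanceIndicator (heval j)
  rw [show P = Matrix.of _ from Matrix.ext hP]
  exact pearson_mem_corrSet hY.aemeasurable fun j ↦ map_exceedanceIndicator (heval j) (hcont j) hp

lemma corrSet_bern_subset_exceedanceCorrSet {p : ℝ} (hp : p ≤ 1) (d : ℕ) :
    corrSet (bern (1 - p)) d ⊆ exceedanceCorrSet p d := by
  rintro P ⟨μ, hμ, hbern, hP⟩
  have hY (j : Fin d) : Measurable fun z : (Fin d → ℝ) × ℝ ↦ z.1 j := by fun_prop
  have hfst : (μ.prod unif01).map Prod.fst = μ := Measure.fst_prod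
  have hsnd : (μ.prod unif01).map Prod.snd = unif01 := Measure.snd_prod
  have hbernY (j : Fin d) : (μ.prod unif01).map (fun z ↦ z.1 j) = bern (1 - p) := by
    calc (μ.prod unif01).map (fun z ↦ z.1 j)
        = ((μ.prod unif01).map Prod.fst).map (fun x ↦ x j) :=
          (Measure.map_map (measurable_pi_apply j) measurable_fst).symm
      _ = bern (1 - p) := by rw [hfst, hbern j]
  have hU01 : ∀ᵐ z ∂μ.prod unif01, z.2 ∈ Ioo (0 : ℝ) 1 :=
    ae_of_ae_map measurable_snd.aemeasurable (hsnd.symm ▸ ae_unif01_mem_Ioo)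
  have hatoms : NullSingletonClass ((μ.prod unif01).map Prod.snd) :=
    hsnd.symm ▸ nullSingletonClass_unif01
  have hcont (j : Fin d) : Continuous (cdfOf ((μ.prod unif01).map fun z ↦ z.1 j + z.2)) :=
    continuous_cdfOf_map_add (hY j) measurable_snd
      (indepFun_prod (measurable_pi_apply j) measurable_id)
  have hrecover (j : Fin d) :
      exceedanceIndicator (μ.prod unif01) p (fun z ↦ z.1 j + z.2)
        =ᵐ[μ.prod unif01] fun z ↦ z.1 j :=
    exceedanceIndicator_add_ae_eq (hY j) measurable_snd hp (hbernY j) hU01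
  convert pearson_exceedanceIndicator_mem_exceedanceCorrSet (p := p)
    (X := fun (z : (Fin d → ℝ) × ℝ) j ↦ z.1 j + z.2) (by fun_prop) hcont using 1
  ext i j
  rw [hP, Matrix.of_apply, pearson_congr_ae (hrecover i) (hrecover j)]
  conv_lhs => rw [← hfst]
  exact pearson_map measurable_fst.aemeasurable (measurable_pi_apply i).aemeasurable
    (measurable_pi_apply j).aemeasurable

theorem blomqvist_matrices_eq_bernoulli_corr_matrices_general {p : ℝ} (hp : p ∈ Ioo (0 : ℝ) 1)
    (d : ℕ) : exceedanceCorrSet p d = corrSet (bern (1 - p)) d :=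
  (exceedanceCorrSet_subset_corrSet_bern hp d).antisymm
    (corrSet_bern_subset_exceedanceCorrSet hp.2.le d)

/-- the set of Blomqvist's beta matrices coincides with the set of
correlation matrices of random vectors with symmetric Bernoulli margins. -/
theorem blomqvist_matrices_eq_bernoulli_corr_matrices (d : ℕ) :
    Bd d = PBd d := by
  have hBd : Bd d = corrSet (bern (1 - 1 / 2)) d :=
    blomqvist_matrices_eq_bernoulli_corr_matrices_general (by norm_num) d
  rw [hBd, sub_half, PBd]
end
end

section
/- Let P ∈ ℝ^{d×d}, d = d1 + ⋯ + dS, be a positive definite block homogeneous matrix with diagonal blocks (1 − ρ_{ss})I_{ds} + ρ_{ss}J_{ds} and off-diagonal blocks ρ_{s1s2}J_{d_{s1}d_{s2}}. Then the Cholesky factor L of P (the lower triangular matrix with positive diagonal such that P = LLᵀ) has the following block structure: the diagonal blocks L_{ss} are lower triangular ds×ds matrices in which all sub-diagonal entries within each column are equal (i.e., L_{ss} has entries (L_{ss})_{jk} = l_{ss,k} for j > k and (L_{ss})_{jj} = l̃_{ss,j}), and each off-diagonal block L_{s+m,s} (m ≥ 1) has constant columns, i.e., L_{s+m,s} = (c_{sm,1}·1_{d_{s+m}},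 …, c_{sm,ds}·1_{d_{s+m}}) for some scalars c_{sm,1},…,c_{sm,ds}. -/
open MeasureTheory ProbabilityTheory Set

noncomputable section

/-- The `d×d` block homogeneous matrix with `S` blocks of sizes `ds 0, …, ds (S-1)`
(indexed by the sigma type `(s : Fin S) × Fin (ds s)`): the `(s,s)` diagonal block is
the compound symmetry matrix `(1 − ρ_{ss}) I + ρ_{ss} J` and the `(s₁,s₂)` off-diagonal
block is the constant matrix `ρ_{s₁s₂} J`. -/
def blockMatrix (S : ℕ) (ds : Fin S → ℕ) (ρ : Fin S → Fin S → ℝ) :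
    Matrix ((s : Fin S) × Fin (ds s)) ((s : Fin S) × Fin (ds s)) ℝ :=
  Matrix.of fun i j =>
    if i.1 = j.1 then (if (i.2 : ℕ) = (j.2 : ℕ) then (1:ℝ) else ρ i.1 i.1)
    else ρ i.1 j.1

/-- The block average map `φ(P)`: `φ(P)_{ss} = (1 + (ds − 1) ρ_{ss})/ds` and
`φ(P)_{s₁s₂} = ρ_{s₁s₂}` for `s₁ ≠ s₂`. -/
def blockAvg (S : ℕ) (ds : Fin S → ℕ) (ρ : Fin S → Fin S → ℝ) :
    Matrix (Fin S) (Fin S) ℝ :=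
  Matrix.of fun s t =>
    if s = t then (1 + ((ds s : ℝ) - 1) * ρ s s) / (ds s : ℝ) else ρ s t

/-- The strict "lower triangular" order on the sigma index type of a block matrix:
`i` comes strictly before `j` if its block comes first, or the blocks agree and its
within-block index is smaller. -/
def sigLT {S : ℕ} {ds : Fin S → ℕ} (i j : (s : Fin S) × Fin (ds s)) : Prop :=
  i.1 < j.1 ∨ (i.1 = j.1 ∧ (i.2 : ℕ) < (j.2 : ℕ))

/-!
Forward substitution in `P = L * U` with `U` upper triangular, here `U = Lᵀ`, computes the row `a`
of `L` up to column `c` from the row `a` of `P` up to column `c`, by the same formula for every `a`.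
Two rows of `P` with indices in the same block agree in every column preceding both indices, hence
so do the corresponding rows of `L`.
-/

section ForwardSubstitution

open Matrix Function

variable {m n κ R : Type*} [Fintype n] [LinearOrder κ] [NonUnitalNonAssocRing R] [NoZeroDivisors R]
  {U : Matrix n n R} {b : n → κ}

theorem eq_zero_of_vecMul_eq_zero_of_blockTriangular (hb : Injective b) (hU : U.BlockTriangular b)
    (hdiag : ∀ k, U k k ≠ 0) {v : n → R} {c : n} (hv : ∀ k, b k ≤ b c → (v ᵥ* U) k = 0) :
    v c = 0 := by
  have wf : WellFounded (InvImage (· < ·) b) := Finite.wellFounded_of_trans_of_irrefl _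
  induction c using wf.induction with
  | _ c ih =>
    have off_pivot_eq_zero : ∀ k, k ≠ c → v k * U k c = 0 := by
      intro k hk
      rcases lt_or_gt_of_ne (hb.ne hk) with hlt | hgt
      · rw [ih k hlt fun j hj => hv j (hj.trans hlt.le), zero_mul]
      · rw [hU hgt, mul_zero]
    have pivot : v c * U c c = 0 :=
      calc v c * U c c = (v ᵥ* U) c := (Fintype.sum_eq_single c off_pivot_eq_zero).symm
        _ = 0 := hv c le_rfl
    exact (mul_eq_zero.mp pivot).resolve_right (hdiag c)

theorem apply_eq_of_mul_apply_eq_of_blockTriangular (hb : Injective b) (hU : U.BlockTriangular b)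
    (hdiag : ∀ k, U k k ≠ 0) {L : Matrix m n R} {i j : m} {c : n}
    (h : ∀ k, b k ≤ b c → (L * U) i k = (L * U) j k) : L i c = L j c := by
  have hdiff : ∀ k, b k ≤ b c → ((L i - L j) ᵥ* U) k = 0 := fun k hk => by
    rw [sub_vecMul, Pi.sub_apply, sub_eq_zero]
    exact h k hk
  exact sub_eq_zero.mp (eq_zero_of_vecMul_eq_zero_of_blockTriangular hb hU hdiag hdiff)

end ForwardSubstitution

theorem sigLT_iff_toLex_lt {S : ℕ} {ds : Fin S → ℕ} {i j : (s : Fin S) × Fin (ds s)} :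
    sigLT i j ↔ toLex i < toLex j := by
  constructor
  · obtain ⟨s, i⟩ := i
    obtain ⟨t, j⟩ := j
    rintro (hst | ⟨rfl, hij⟩)
    · exact .left _ _ hst
    · exact .right _ _ hij
  · rintro (⟨_, _, hst⟩ | ⟨_, _, hij⟩)
    · exact .inl hst
    · exact .inr ⟨rfl, hij⟩

theorem blockMatrix_apply_of_ne {S : ℕ} {ds : Fin S → ℕ} {ρ : Fin S → Fin S → ℝ}
    {i j : (s : Fin S) × Fin (ds s)} (hij : i ≠ j) : blockMatrix S ds ρ i j = ρ i.1 j.1 := by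
  obtain ⟨s, i⟩ := i
  obtain ⟨t, j⟩ := j
  by_cases hst : s = t
  · subst hst
    have hval : (i : ℕ) ≠ j := fun h => hij (by rw [Fin.ext h])
    simp [blockMatrix, hval]
  · simp [blockMatrix, hst]

theorem cholesky_factor_of_block_matrix_general {ι R : Type*} {α : ι → Type*} [Fintype ι]
    [LinearOrder ι] [∀ s, Fintype (α s)] [∀ s, LinearOrder (α s)] [NonUnitalNonAssocRing R]
    [NoZeroDivisors R] {P L U : Matrix (Σ s, α s) (Σ s, α s) R} {ρ : ι → ι → R}
    (hP : ∀ i j, i ≠ j → P i j = ρ i.1 j.1) (hU : U.BlockTriangular toLex)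
    (hdiag : ∀ i, U i i ≠ 0) (hLU : P = L * U) :
    (∀ (s : ι) (i i' k : α s), k < i → k < i' → L ⟨s, i⟩ ⟨s, k⟩ = L ⟨s, i'⟩ ⟨s, k⟩) ∧
    (∀ s t : ι, s < t → ∀ (k : α s) (j j' : α t), L ⟨t, j⟩ ⟨s, k⟩ = L ⟨t, j'⟩ ⟨s, k⟩) := by
  have same_block : ∀ {t : ι} {j j' : α t} {c : Σ s, α s}, toLex c < toLex ⟨t, j⟩ →
      toLex c < toLex ⟨t, j'⟩ → L ⟨t, j⟩ c = L ⟨t, j'⟩ c := by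
    intro t j j' c hj hj'
    refine apply_eq_of_mul_apply_eq_of_blockTriangular toLex.injective hU hdiag fun k hk => ?_
    have hkj : ⟨t, j⟩ ≠ k := fun h => (hk.trans_lt hj).ne' (congrArg toLex h)
    have hkj' : ⟨t, j'⟩ ≠ k := fun h => (hk.trans_lt hj').ne' (congrArg toLex h)
    rw [← hLU, hP _ k hkj, hP _ k hkj']
  exact ⟨fun s i i' k hi hi' => same_block (.right _ _ hi) (.right _ _ hi'),
    fun s t hst k j j' => same_block (.left _ _ hst) (.left _ _ hst)⟩

/-- the Cholesky factor `L` (lower triangular with positive diagonal,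
`P = L Lᵀ`) of a positive definite block homogeneous matrix `P` has the following
structure: within each diagonal block all sub-diagonal entries of a given column are
equal, and each off-diagonal block has constant columns. -/
theorem cholesky_factor_of_block_matrix (S : ℕ) (ds : Fin S → ℕ)
    (ρ : Fin S → Fin S → ℝ) (hsym : ∀ s t, ρ s t = ρ t s)
    (hrange : ∀ s t, ρ s t ∈ Set.Icc (-1:ℝ) 1)
    (hPD : (blockMatrix S ds ρ).PosDef)
    (L : Matrix ((s : Fin S) × Fin (ds s)) ((s : Fin S) × Fin (ds s)) ℝ)
    (htri : ∀ i j : (s : Fin S) × Fin (ds s), sigLT i j → L i j = 0)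
    (hdiag : ∀ i, 0 < L i i)
    (hchol : blockMatrix S ds ρ = L * L.transpose) :
    (∀ (s : Fin S) (i i' k : Fin (ds s)), (k : ℕ) < (i : ℕ) → (k : ℕ) < (i' : ℕ) →
        L ⟨s, i⟩ ⟨s, k⟩ = L ⟨s, i'⟩ ⟨s, k⟩) ∧
    (∀ s t : Fin S, s < t → ∀ (k : Fin (ds s)) (j j' : Fin (ds t)),
        L ⟨t, j⟩ ⟨s, k⟩ = L ⟨t, j'⟩ ⟨s, k⟩) :=
  cholesky_factor_of_block_matrix_general (fun _ _ => blockMatrix_apply_of_ne)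
    (fun j i hij => htri i j (sigLT_iff_toLex_lt.mpr hij)) (fun i => (hdiag i).ne') hchol
end
end
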